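/- arXiv:2502.02033 — 5 statements merged into one kernel-verified Lean document; each statement's English description precedes it below -/
import Mathlib

section
/- Let G be a finite abelian group of even order, let G_1 be a subgroup of G of index two, and let G_2 be the nontrivial coset of G_1 in G. Let n be an even integer with n ≥ |G|/2 + 1 and set k = n/2. Suppose A is a set of n pairwise distinct elements of G, g ∈ G_1 with g ∉ A, the elements of A sum to 2g, and n_2 := |A ∩ G_2| ≤ k − 3. Then there exists a subset B ⊆ A with |B| = k whose elements sum to g. -/
/-!
Choose `B` to contain all of `A` outside `G₁`; what remains is to write a prescribed element of `G₁`
as a sum of `j ≥ 3` distinct elements of `A ∩ G₁`. Fixing `j - 3` summands arbitrarily reduces this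
to three summands with sum `t`, taken from a set `S` of at least `|G₁| / 2 + 2` elements. For any
`c ∈ S`, the set `S` meets its reflection under `x ↦ t - c - x` in at least four points `x`, and
`t = x + (t - c - x) + c` has distinct summands unless `x = c`, `x = t - 2c` or `2x = t - c`. Since
`|G₁| < 2 |S|`, some `c ∈ S` has at most one solution of `2x = t - c`, leaving at most three bad
points.
-/

open Finset

/-- The restricted sumset `j^∧S` (also written `Σ_j(S)`): all sums of `j` pairwise distinct elements
of `S`, encoded as sums over subsets of `S` of cardinality `j`. -/
def restrictedSumset {M : Type*} [AddCommMonoid M] (j : ℕ) (S : Finset M) : Set M :=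
  {t | ∃ T ⊆ S, #T = j ∧ ∑ x ∈ T, x = t}

theorem sum_add_mem_restrictedSumset {M : Type*} [AddCommMonoid M] [DecidableEq M]
    {C S : Finset M} {j : ℕ} {t : M} (hCS : C ⊆ S) (ht : t ∈ restrictedSumset j (S \ C)) :
    ∑ x ∈ C, x + t ∈ restrictedSumset (#C + j) S := by
  obtain ⟨T, hTS, rfl, rfl⟩ := ht
  have hdisj : Disjoint C T := disjoint_sdiff.mono_right hTS
  exact ⟨C ∪ T, union_subset hCS (hTS.trans sdiff_subset), card_union_of_disjoint hdisj,
    sum_union hdisj⟩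

theorem map_mem_restrictedSumset {M N : Type*} [AddCommMonoid M] [AddCommMonoid N] {f : M →+ N}
    (hf : Function.Injective f) {S : Finset M} {j : ℕ} {t : M} (ht : t ∈ restrictedSumset j S) :
    f t ∈ restrictedSumset j (S.map ⟨f, hf⟩) := by
  obtain ⟨T, hTS, rfl, rfl⟩ := ht
  exact ⟨T.map ⟨f, hf⟩, map_subset_map.mpr hTS, card_map _, by simp⟩

theorem card_add_card_le_card_add_card_filter_apply_mem {α β : Type*} [Fintype α] [DecidableEq β]
    (e : α ≃ β) (S : Finset α) (T : Finset β) :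
    #S + #T ≤ Fintype.card α + #{a ∈ S | e a ∈ T} := by
  classical
  have hinter : S ∩ T.map e.symm.toEmbedding = {a ∈ S | e a ∈ T} := by
    ext a
    simp
  calc #S + #T = #S + #(T.map e.symm.toEmbedding) := by rw [card_map]
    _ = #(S ∪ T.map e.symm.toEmbedding) + #{a ∈ S | e a ∈ T} := by
      rw [← hinter, card_union_add_card_inter]
    _ ≤ Fintype.card α + #{a ∈ S | e a ∈ T} := by
      gcongr
      exact card_le_univ _

theorem mem_restrictedSumset_three {K : Type*} [AddCommGroup K] [Finite K] {S : Finset K}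
    (hS : Nat.card K + 4 ≤ 2 * #S) (t : K) : t ∈ restrictedSumset 3 S := by
  classical
  have := Fintype.ofFinite K
  rw [Nat.card_eq_fintype_card] at hS
  obtain ⟨c, hcS, hfiber⟩ : ∃ c ∈ S, #{x | t - x - x = c} < 2 :=
    exists_card_fiber_lt_of_card_lt_mul (by rw [card_univ]; omega)
  have hpairs : 4 ≤ #{a ∈ S | t - c - a ∈ S} := by
    have := card_add_card_le_card_add_card_filter_apply_mem (Equiv.subLeft (t - c)) S S
    simp only [Equiv.subLeft_apply] at this
    omega
  have hbad : #({c, t - c - c} ∪ ({x | t - x - x = c} : Finset K)) < 4 :=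
    calc _ ≤ #{c, t - c - c} + #{x | t - x - x = c} := card_union_le _ _
      _ < 2 + 2 := add_lt_add_of_le_of_lt card_le_two hfiber
  obtain ⟨a, ha, ha_bad⟩ := exists_mem_notMem_of_card_lt_card (hbad.trans_le hpairs)
  obtain ⟨haS, hbS⟩ := mem_filter.mp ha
  simp only [mem_union, mem_insert, mem_singleton, mem_filter, mem_univ, true_and, not_or]
    at ha_bad
  obtain ⟨⟨hac, ha_refl⟩, ha_half⟩ := ha_bad
  have hab : a ≠ t - c - a := fun h ↦ ha_half (by grind)
  have hbc : t - c - a ≠ c := fun h ↦ ha_refl (by grind)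
  refine ⟨{a, t - c - a, c}, by simp [insert_subset_iff, haS, hbS, hcS],
    card_eq_three.mpr ⟨_, _, _, hab, hac, hbc, rfl⟩, ?_⟩
  rw [sum_insert (by simp [hab, hac]), sum_pair hbc]
  abel

theorem mem_restrictedSumset_of_three_le {K : Type*} [AddCommGroup K] [Finite K] {S : Finset K}
    {j : ℕ} (hj : 3 ≤ j) (hS : Nat.card K + 2 * j ≤ 2 * #S + 2) (t : K) :
    t ∈ restrictedSumset j S := by
  classical
  obtain ⟨C, hCS, hC⟩ := exists_subset_card_eq (s := S) (n := j - 3) (by omega)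
  have hrest : t - ∑ x ∈ C, x ∈ restrictedSumset 3 (S \ C) :=
    mem_restrictedSumset_three (by rw [card_sdiff_of_subset hCS]; omega) _
  have := sum_add_mem_restrictedSumset hCS hrest
  rwa [add_sub_cancel, hC, Nat.sub_add_cancel hj] at this

theorem mem_restrictedSumset_of_mem_addSubgroup {G : Type*} [AddCommGroup G] (H : AddSubgroup G)
    [Finite H] {S : Finset G} (hSH : ∀ a ∈ S, a ∈ H) {j : ℕ} (hj : 3 ≤ j)
    (hS : Nat.card H + 2 * j ≤ 2 * #S + 2) {t : G} (ht : t ∈ H) : t ∈ restrictedSumset j S := by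
  classical
  obtain ⟨S, rfl⟩ : ∃ S' : Finset H, S'.map ⟨H.subtype, H.subtype_injective⟩ = S :=
    ⟨S.subtype (· ∈ H), subtype_map_of_mem hSH⟩
  rw [card_map] at hS
  exact map_mem_restrictedSumset H.subtype_injective
    (mem_restrictedSumset_of_three_le hj hS ⟨t, ht⟩)

theorem iso_dual_max_length_case_I_general {G : Type*} [AddCommGroup G]
    (H : AddSubgroup G) [Finite H] [DecidablePred (· ∈ H)] (k : ℕ) (A : Finset G)
    (hcard : Nat.card H + 2 * k ≤ 2 * #A + 2) (g : G) (hsum : ∑ a ∈ A, a - g ∈ H)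
    (hk : #{a ∈ A | a ∉ H} + 3 ≤ k) :
    ∃ B ⊆ A, #B = k ∧ ∑ b ∈ B, b = g := by
  classical
  set F := {a ∈ A | a ∉ H}
  have hFA : F ⊆ A := filter_subset _ _
  have hFcard : #(A \ F) = #A - #F := card_sdiff_of_subset hFA
  have hmem_H : ∀ a ∈ A \ F, a ∈ H := by simp +contextual [F]
  have htarget : g - ∑ a ∈ F, a ∈ H := by
    rw [← sum_sdiff hFA] at hsum
    convert H.sub_mem (H.sum_mem hmem_H) hsum using 1
    abel
  have hrest : g - ∑ a ∈ F, a ∈ restrictedSumset (k - #F) (A \ F) :=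
    mem_restrictedSumset_of_mem_addSubgroup H hmem_H (by omega) (by omega) htarget
  have hg := sum_add_mem_restrictedSumset hFA hrest
  rwa [add_sub_cancel, Nat.add_sub_cancel' (by omega)] at hg

/-- Case I in the proof of Lemma 3.1: `G` a finite abelian group of even order, `G₁` an
index-two subgroup with nontrivial coset `G₂`, `n` even with `n ≥ |G|/2 + 1`, `k = n/2`,
`A` a set of `n` pairwise distinct elements of `G` summing to `2g`, `g ∈ G₁`, `g ∉ A`,
and `n₂ = |A ∩ G₂| ≤ k - 3`. Then `g` is a sum of `k` pairwise distinct elements of `A`. -/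
theorem iso_dual_max_length_case_I {G : Type*} [AddCommGroup G] [Fintype G]
    (hG : Even (Fintype.card G))
    (G₁ : AddSubgroup G) [DecidablePred (· ∈ G₁)] (hidx : G₁.index = 2)
    (n : ℕ) (hn : Even n) (hnG : Fintype.card G / 2 + 1 ≤ n)
    (k : ℕ) (hk : k = n / 2)
    (A : Finset G) (hA : A.card = n)
    (g : G) (hgG₁ : g ∈ G₁) (hgA : g ∉ A)
    (hsum : ∑ a ∈ A, a = 2 • g)
    (hn₂ : (A.filter (fun a => a ∉ G₁)).card + 3 ≤ k) :
    ∃ B ⊆ A, B.card = k ∧ ∑ b ∈ B, b = g := by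
  have hG₁ : Nat.card G₁ * 2 = Fintype.card G := by
    rw [← Nat.card_eq_fintype_card, ← G₁.card_mul_index, hidx]
  exact iso_dual_max_length_case_I_general G₁ k A (by omega) g
    (by rwa [hsum, two_nsmul, add_sub_cancel_right]) hn₂
end

section
/- Let G be a finite abelian group of even order, let G_1 be a subgroup of G of index two, and let G_2 be the nontrivial coset of G_1 in G. Let n be an even integer with n ≥ |G|/2 + 1 and set k = n/2. Suppose A is a set of n pairwise distinct elements of G, g ∈ G_2 with g ∉ A, the elements of A sum to 2g, and n_2 := |A ∩ G_2| ≤ k − 3. Then there exists a subset B ⊆ A with |B| = k whose elements sum to g. -/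
/-! The elements of `A` outside `G₁` all lie in the coset of `g`, so it suffices to take one of
them, `x`, and to represent `g - x` as a sum of `k - 1` distinct elements of `S = A ∩ G₁`. Passing
to complements in `S`, it is enough to represent an arbitrary element of `G₁` as a sum of `j ≥ 3`
distinct elements of `S`, where now `j` is so small that many elements of `S` are left over. Choose
the first `j - 2` summands so that the remaining target `y` has at most one half; this is possible
because either doubling is injective on `G₁`, or `2G₁` is a proper subgroup and `S` is too large to
lie in one of its cosets, so that exchanging one summand moves `y` out of `2G₁`. The unused part `R`
of `S` is then so large that `R` and `y - R` meet in at least two points, one of which is not a half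
of `y`. -/

section

open Finset

lemma exists_mem_notMem_of_natCard_lt {α : Type*} {s : Set α} [Finite s] {A : Finset α}
    (hA : Nat.card s < #A) : ∃ a ∈ A, a ∉ s :=
  Set.exists_mem_notMem_of_ncard_lt_ncard (by rwa [Set.ncard_coe_finset])

section AddGroup

variable {G : Type*} [AddGroup G]

lemma two_mul_natCard_le_of_ne_top [Finite G] {K : AddSubgroup G} (hK : K ≠ ⊤) :
    2 * Nat.card K ≤ Nat.card G := by
  rw [← K.card_mul_index, mul_comm]
  exact Nat.mul_le_mul_left _ (K.one_lt_index_of_ne_top hK)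

lemma exists_sub_notMem_of_natCard_lt {K : AddSubgroup G} [Finite K] {S : Finset G}
    (hS : Nat.card K < #S) : ∃ a ∈ S, ∃ b ∈ S, a - b ∉ K := by
  obtain ⟨b, hb⟩ : S.Nonempty := card_pos.1 (by omega)
  obtain ⟨_, hc, hcK⟩ := exists_mem_notMem_of_natCard_lt (s := (K : Set G))
    (A := S.map (Equiv.subRight b).toEmbedding) (by rwa [card_map])
  obtain ⟨a, ha, rfl⟩ := mem_map.1 hc
  exact ⟨a, ha, b, hb, hcK⟩

end AddGroup

variable {G : Type*} [AddCommGroup G]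

lemma exists_ne_add_eq_of_natCard_add_ncard_lt [Finite G] {R : Finset G} {y : G}
    (hR : Nat.card G + {a : G | 2 • a = y}.ncard < 2 * #R) :
    ∃ a ∈ R, ∃ b ∈ R, a ≠ b ∧ a + b = y := by
  classical
  have := Fintype.ofFinite G
  have hreflect : #(R.image (y - ·)) = #R := card_image_of_injective _ sub_right_injective
  have hunion : #(R ∪ R.image (y - ·)) ≤ Nat.card G := by
    simpa only [Nat.card_eq_fintype_card] using card_le_univ _
  have hinter : {a : G | 2 • a = y}.ncard < (↑(R ∩ R.image (y - ·)) : Set G).ncard := by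
    have := card_union_add_card_inter R (R.image (y - ·))
    rw [Set.ncard_coe_finset]
    omega
  obtain ⟨a, ha, hay⟩ := Set.exists_mem_notMem_of_ncard_lt_ncard hinter
  obtain ⟨haR, b, hbR, rfl⟩ : a ∈ R ∧ ∃ b ∈ R, y - b = a := by simpa using ha
  refine ⟨y - b, haR, b, hbR, fun hab => hay ?_, sub_add_cancel y b⟩
  rw [Set.mem_ofPred_eq, two_nsmul]
  nth_rw 2 [hab]
  exact sub_add_cancel y b

lemma exists_subset_card_eq_sub_sum_notMem {K : AddSubgroup G} {S : Finset G} {a b : G}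
    (ha : a ∈ S) (hb : b ∈ S) (hab : a - b ∉ K) {j : ℕ} (hj : j ≠ 0) (hjS : j < #S) (h : G) :
    ∃ C ⊆ S, #C = j ∧ h - ∑ c ∈ C, c ∉ K := by
  classical
  have hne : a ≠ b := fun heq => hab (by simp [heq])
  have hcard : #(S \ {a, b}) = #S - 2 := by
    rw [card_sdiff_of_subset (by simp [insert_subset_iff, ha, hb]), card_pair hne]
  obtain ⟨C, hC, hCj⟩ := exists_subset_card_eq (show j - 1 ≤ #(S \ {a, b}) by omega)
  have hCS : C ⊆ S := hC.trans sdiff_subset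
  have haC : a ∉ C := fun hx => by simpa using hC hx
  have hbC : b ∉ C := fun hx => by simpa using hC hx
  by_cases hK : h - ∑ c ∈ insert a C, c ∈ K
  · refine ⟨insert b C, insert_subset hb hCS, by rw [card_insert_of_notMem hbC]; omega,
      fun hK' => hab ?_⟩
    have hdiff : a - b = (h - ∑ c ∈ insert b C, c) - (h - ∑ c ∈ insert a C, c) := by
      rw [sum_insert haC, sum_insert hbC]
      abel
    exact hdiff ▸ K.sub_mem hK' hK
  · exact ⟨insert a C, insert_subset ha hCS, by rw [card_insert_of_notMem haC]; omega, hK⟩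

lemma exists_subset_card_eq_ncard_two_nsmul_eq_le_one [Finite G] {S : Finset G}
    (hS : Nat.card G < 2 * #S) {j : ℕ} (hj : j ≠ 0) (hjS : j < #S) (h : G) :
    ∃ C ⊆ S, #C = j ∧ {a : G | 2 • a = h - ∑ c ∈ C, c}.ncard ≤ 1 := by
  by_cases hinj : Function.Injective (nsmulAddMonoidHom 2 : G →+ G)
  · obtain ⟨C, hC, hCj⟩ := exists_subset_card_eq hjS.le
    exact ⟨C, hC, hCj, (Set.ncard_le_one_iff).2 fun ha hb => hinj (ha.trans hb.symm)⟩
  · have hrange : (nsmulAddMonoidHom 2 : G →+ G).range ≠ ⊤ := fun htop =>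
      hinj (Finite.injective_iff_surjective.2 (AddMonoidHom.range_eq_top.1 htop))
    have hcard := two_mul_natCard_le_of_ne_top hrange
    obtain ⟨a, ha, b, hb, hab⟩ := exists_sub_notMem_of_natCard_lt
      (K := (nsmulAddMonoidHom 2 : G →+ G).range) (S := S) (by omega)
    obtain ⟨C, hC, hCj, hCh⟩ := exists_subset_card_eq_sub_sum_notMem ha hb hab hj hjS h
    have hempty : {a : G | 2 • a = h - ∑ c ∈ C, c} = ∅ :=
      Set.eq_empty_of_forall_notMem fun x hx => hCh ⟨x, hx⟩
    exact ⟨C, hC, hCj, by simp [hempty]⟩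

lemma exists_subset_card_eq_sum_eq_of_three_le [Finite G] {S : Finset G} {j : ℕ} (hj : 3 ≤ j)
    (hS : Nat.card G + 2 * j ≤ 2 * #S + 2) (h : G) :
    ∃ D ⊆ S, #D = j ∧ ∑ x ∈ D, x = h := by
  classical
  obtain ⟨C, hC, hCj, hhalf⟩ := exists_subset_card_eq_ncard_two_nsmul_eq_le_one
    (S := S) (j := j - 2) (by omega) (by omega) (by have := Nat.card_pos (α := G); omega) h
  have hrest := card_sdiff_of_subset hC
  obtain ⟨a, ha, b, hb, hab, hsum⟩ :=
    exists_ne_add_eq_of_natCard_add_ncard_lt (R := S \ C) (y := h - ∑ c ∈ C, c) (by omega)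
  rw [mem_sdiff] at ha hb
  have haC : a ∉ insert b C := by simp [hab, ha.2]
  refine ⟨insert a (insert b C), insert_subset ha.1 (insert_subset hb.1 hC), ?_, ?_⟩
  · rw [card_insert_of_notMem haC, card_insert_of_notMem hb.2]
    omega
  · rw [sum_insert haC, sum_insert hb.2, ← add_assoc, hsum, sub_add_cancel]

lemma exists_subset_card_eq_sum_eq_of_add_three_le [Finite G] {S : Finset G} {k : ℕ}
    (hG : Nat.card G ≤ 2 * k + 2) (hS : k + 3 ≤ #S) (h : G) :
    ∃ E ⊆ S, #E = k ∧ ∑ x ∈ E, x = h := by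
  classical
  obtain ⟨D, hD, hDj, hDsum⟩ := exists_subset_card_eq_sum_eq_of_three_le
    (S := S) (j := #S - k) (by omega) (by omega) (∑ x ∈ S, x - h)
  refine ⟨S \ D, sdiff_subset, by rw [card_sdiff_of_subset hD]; omega, ?_⟩
  rw [sum_sdiff_eq_sub hD, hDsum, sub_sub_cancel]

lemma exists_subset_filter_mem_card_eq_sum_eq {H : AddSubgroup G} [Finite H]
    [DecidablePred (· ∈ H)] {A : Finset G} {k : ℕ} (hH : Nat.card H ≤ 2 * k + 2)
    (hA : k + 3 ≤ #{a ∈ A | a ∈ H}) {h : G} (hh : h ∈ H) :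
    ∃ E ⊆ {a ∈ A | a ∈ H}, #E = k ∧ ∑ x ∈ E, x = h := by
  obtain ⟨E, hE, hEk, hEsum⟩ := exists_subset_card_eq_sum_eq_of_add_three_le
    (S := A.subtype (· ∈ H)) hH (by rwa [card_subtype]) ⟨h, hh⟩
  refine ⟨E.map (.subtype _), ?_, by rw [card_map, hEk], ?_⟩
  · rw [← subtype_map]
    exact map_subset_map.2 hE
  · simpa [sum_map] using congrArg H.subtype hEsum

lemma exists_subset_card_eq_sum_eq_of_sub_mem {H : AddSubgroup G} [Finite H]
    [DecidablePred (· ∈ H)] {A : Finset G} {k : ℕ} (hH : Nat.card H ≤ 2 * k)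
    (hA : k + 2 ≤ #{a ∈ A | a ∈ H}) {g x : G} (hxA : x ∈ A) (hxH : x ∉ H) (hgx : g - x ∈ H) :
    ∃ B ⊆ A, #B = k ∧ ∑ b ∈ B, b = g := by
  classical
  have hpos := Nat.card_pos (α := H)
  obtain ⟨E, hE, hEk, hEsum⟩ := exists_subset_filter_mem_card_eq_sum_eq
    (A := A) (k := k - 1) (by omega) (by omega) hgx
  have hxE : x ∉ E := fun hx => hxH (mem_filter.1 (hE hx)).2
  refine ⟨insert x E, insert_subset hxA (hE.trans (filter_subset _ _)), ?_, ?_⟩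
  · rw [card_insert_of_notMem hxE]
    omega
  · rw [sum_insert hxE, hEsum, add_sub_cancel]

theorem iso_dual_max_length_case_II_general {G₁ : AddSubgroup G} [Finite G₁]
    [DecidablePred (· ∈ G₁)] (hidx : G₁.index = 2) {A : Finset G} (hAG₂ : ∃ x ∈ A, x ∉ G₁)
    {k : ℕ} (hk : Nat.card G₁ ≤ 2 * k) (hn₂ : #{a ∈ A | a ∉ G₁} + k + 2 ≤ #A)
    {g : G} (hg : g ∉ G₁) :
    ∃ B ⊆ A, #B = k ∧ ∑ b ∈ B, b = g := by
  obtain ⟨x, hxA, hxG₁⟩ := hAG₂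
  have hgx : g - x ∈ G₁ := by
    rw [sub_eq_add_neg, AddSubgroup.add_mem_iff_of_index_two hidx, neg_mem_iff]
    exact iff_of_false hg hxG₁
  have hsplit := A.card_filter_add_card_filter_not (· ∈ G₁)
  exact exists_subset_card_eq_sum_eq_of_sub_mem hk (by omega) hxA hxG₁ hgx

end

/-- Case II in the proof of Lemma 3.1: `G` a finite abelian group of even order, `G₁` an
index-two subgroup with nontrivial coset `G₂`, `n` even with `n ≥ |G|/2 + 1`, `k = n/2`,
`A` a set of `n` pairwise distinct elements of `G` summing to `2g`, `g ∈ G₂` (i.e. `g ∉ G₁`),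
`g ∉ A`, and `n₂ = |A ∩ G₂| ≤ k - 3`. Then `g` is a sum of `k` pairwise distinct elements
of `A`. -/
theorem iso_dual_max_length_case_II {G : Type*} [AddCommGroup G] [Fintype G]
    (hG : Even (Fintype.card G))
    (G₁ : AddSubgroup G) [DecidablePred (· ∈ G₁)] (hidx : G₁.index = 2)
    (n : ℕ) (hn : Even n) (hnG : Fintype.card G / 2 + 1 ≤ n)
    (k : ℕ) (hk : k = n / 2)
    (A : Finset G) (hA : A.card = n)
    (g : G) (hgG₂ : g ∉ G₁) (hgA : g ∉ A)
    (hsum : ∑ a ∈ A, a = 2 • g)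
    (hn₂ : (A.filter (fun a => a ∉ G₁)).card + 3 ≤ k) :
    ∃ B ⊆ A, B.card = k ∧ ∑ b ∈ B, b = g := by
  have hcard : Nat.card G₁ * 2 = Fintype.card G := by
    rw [← hidx, G₁.card_mul_index, Nat.card_eq_fintype_card]
  have hlt : Nat.card G₁ < A.card := by omega
  exact iso_dual_max_length_case_II_general hidx
    (exists_mem_notMem_of_natCard_lt (s := (G₁ : Set G)) hlt) (by omega) (by omega) hgG₂
end

section
/- Let G be a finite abelian group, let G[2] denote its 2-torsion subgroup, and let A be a subset of G with |A| > max{(2/5)|G|, 12|G[2]| + 54}. Then either Σ_3(A) = G, or A is contained in a coset of an index-two subgroup of G. -/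
/-!
Suppose `g ∉ Σ₃(A)`. The theorem reduces to `g ∉ A + A + A`: then `A + A` misses `g - A`, so
`|A + A| ≤ |G| - |A| < 3|A|/2`, and a set of doubling less than `3/2` lies in a coset of a subgroup
`H` with `|A| ≤ |H| < 3|A|/2`, whose index can only be two.

Suppose then that `g ∈ A + A + A`, and write `n = |A|`, `S = G \ (g - A)`, so `|S| < 3n/2`.
All solutions of `a + b + c = g` in `A` have a repeated term, so there are at most `3n` of them and
almost all pairs in `A × A` have their sum in `S`. By Cauchy-Schwarz the additive energy of `A` is
at least about `n⁴ / |S| > 2n³/3`. On the other hand, each of `a + A`, `b + A` is almost disjoint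
from `g - A`, so `a + A` and `b + A` meet in at least about `2n - |S| > n/2` points. Likewise
`A - x` and `y - A` are almost disjoint if `x + y + z = g` in `A`, so `|A - A|` is at least about
`2n`. Since the `n²` differences have about `2n` values, each taken at least about `n/2` times, the
energy is at most about `n³/2`.
-/

namespace ThreefoldSum

open Finset
open scoped Pointwise Combinatorics.Additive

lemma card_add_card_add_card_le {α : Type*} [DecidableEq α] (X Y Z : Finset α) :
    #X + #Y + #Z ≤ #(X ∪ Y ∪ Z) + #(X ∩ Y) + #(X ∩ Z) + #(Y ∩ Z) := by
  have hXY := card_union_add_card_inter X Y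
  have hXYZ := card_union_add_card_inter (X ∪ Y) Z
  have hle := card_union_le (X ∩ Z) (Y ∩ Z)
  rw [← union_inter_distrib_right] at hle
  omega

lemma card_filter_map_eq_le_card_ker {G H : Type*} [AddGroup G] [AddGroup H] [DecidableEq H]
    (f : G →+ H) [Finite f.ker] (A : Finset G) (y : H) :
    #{a ∈ A | f a = y} ≤ Nat.card f.ker := by
  obtain hempty | ⟨a₀, ha₀⟩ := ({a ∈ A | f a = y} : Finset G).eq_empty_or_nonempty
  · simp [hempty]
  obtain ⟨-, rfl⟩ := mem_filter.1 ha₀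
  rw [← Nat.card_eq_finsetCard]
  refine Nat.card_le_card_of_injective (fun a => ⟨a.1 - a₀, ?_⟩) fun a b hab => ?_
  · rw [AddMonoidHom.mem_ker, map_sub, (mem_filter.1 a.2).2, sub_self]
  · exact Subtype.ext (sub_left_injective (Subtype.ext_iff.1 hab))

section Convolution

variable {G : Type*} [AddCommGroup G] [DecidableEq G]

lemma addConvolution_eq_card_filter_sub_mem (A B : Finset G) (x : G) :
    A.addConvolution B x = #{a ∈ A | x - a ∈ B} := by
  rw [← card_inter_vadd_neg, ← filter_mem_eq_inter]
  congr! 2 with a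
  rw [← neg_vadd_mem_iff, mem_neg', vadd_eq_add, neg_add_rev, neg_neg, sub_eq_add_neg, add_comm]

lemma sum_addConvolution_sub (A B C : Finset G) (g : G) :
    ∑ a ∈ A, B.addConvolution C (g - a) = #{p ∈ A ×ˢ B | g - (p.1 + p.2) ∈ C} := by
  simp only [addConvolution_eq_card_filter_sub_mem, sub_sub, card_filter, sum_product]

lemma sum_card_filter_map_eq_sub_le {ι : Type*} (A : Finset G) (B : Finset ι) (f : ι → G) (g : G) :
    ∑ a ∈ A, #{b ∈ B | f b = g - a} ≤ #B := by
  have hcomm (a : G) (b : ι) : f b = g - a ↔ g - f b = a := by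
    rw [eq_sub_iff_add_eq, sub_eq_iff_eq_add, eq_comm, add_comm]
  simp only [hcomm]
  rw [sum_card_fiberwise_eq_card_filter]
  exact card_filter_le _ _

lemma sum_product_sub {M : Type*} [AddCommMonoid M] (A B : Finset G) (f : G → M) :
    ∑ p ∈ A ×ˢ B, f (p.1 - p.2) = ∑ d ∈ A - B, A.addConvolution (-B) d • f d := by
  rw [← sum_fiberwise_of_maps_to (g := fun p : G × G => p.1 - p.2) (t := A - B)
    fun p hp => sub_mem_sub (mem_product.1 hp).1 (mem_product.1 hp).2]
  refine sum_congr rfl fun d _ => ?_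
  rw [← card_sub_eq, ← sum_const]
  exact sum_congr rfl fun p hp => by rw [(mem_filter.1 hp).2]

-- Inclusion-exclusion for the translates `a + A`, `b + B` and the reflection `c - C`.
lemma card_add_card_add_card_le_addConvolution [Fintype G] (A B C : Finset G) (a b c : G) :
    #A + #B + #C ≤ Fintype.card G + A.addConvolution (-B) (b - a) +
      A.addConvolution C (c - a) + B.addConvolution C (c - b) := by
  have h := card_add_card_add_card_le (a +ᵥ A) (b +ᵥ B) (c +ᵥ -C)
  simp only [card_vadd_inter_vadd, card_vadd_finset, card_neg, neg_neg, neg_add_eq_sub] at h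
  grw [card_le_univ] at h
  exact h

-- `A - x` and `y - B` both lie in `A - B`, and they meet in `A.addConvolution B (x + y)` points.
lemma card_add_card_le_card_sub_add_addConvolution (A B : Finset G) {x y : G}
    (hx : x ∈ B) (hy : y ∈ A) :
    #A + #B ≤ #(A - B) + A.addConvolution B (x + y) := by
  have hA : -x +ᵥ A ⊆ A - B := by
    rintro _ h
    obtain ⟨a, ha, rfl⟩ := mem_vadd_finset.1 h
    simpa [neg_add_eq_sub] using sub_mem_sub ha hx
  have hB : y +ᵥ -B ⊆ A - B := by
    rw [sub_eq_add_neg]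
    exact vadd_finset_subset_add hy
  have h := card_union_add_card_inter (-x +ᵥ A) (y +ᵥ -B)
  simp only [card_vadd_inter_vadd, card_vadd_finset, card_neg, neg_neg] at h
  rw [← h]
  gcongr
  exact union_subset hA hB

lemma card_add_card_le_of_notMem_add [Fintype G] {A B : Finset G} {g : G} (hg : g ∉ A + B) :
    #A + #B ≤ Fintype.card G := by
  have hdisj : Disjoint A (g +ᵥ -B) := by
    rw [disjoint_iff_inter_eq_empty, ← card_eq_zero, card_inter_vadd, neg_neg]
    exact addConvolution_eq_zero.2 hg
  calc #A + #B = #(A ∪ (g +ᵥ -B)) := by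
        rw [card_union_of_disjoint hdisj, card_vadd_finset, card_neg]
    _ ≤ Fintype.card G := card_le_univ _

end Convolution

section Energy

variable {G : Type*} [AddCommGroup G] [DecidableEq G]

lemma addEnergy_neg_right (A B : Finset G) : E[A, -B] = E[A, B] := by
  refine card_nbij' (fun q => (q.1, -q.2.2, -q.2.1)) (fun q => (q.1, -q.2.2, -q.2.1))
    ?_ ?_ (by simp [Set.LeftInvOn]) (by simp [Set.LeftInvOn]) <;>
  · rintro ⟨⟨a₁, a₂⟩, b₁, b₂⟩ h
    simp only [coe_filter, mem_product, mem_neg', Set.mem_ofPred_eq, neg_neg] at h ⊢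
    obtain ⟨⟨ha, hb₁, hb₂⟩, hab⟩ := h
    refine ⟨⟨ha, hb₂, hb₁⟩, ?_⟩
    rwa [← sub_eq_add_neg, ← sub_eq_add_neg, sub_eq_sub_iff_add_eq_add]

lemma addEnergy_eq_sum_sq_addConvolution_neg (A B : Finset G) :
    E[A, B] = ∑ d ∈ A - B, A.addConvolution (-B) d ^ 2 := by
  rw [← addEnergy_neg_right, addEnergy_eq_sum_sq', sub_eq_add_neg]
  rfl

-- Cauchy-Schwarz on the pairs whose sum lies outside `g - C`.
lemma sq_card_mul_card_sub_le_mul_addEnergy [Fintype G] (A B C : Finset G) (g : G) :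
    ((#A : ℤ) * #B - ∑ a ∈ A, (B.addConvolution C (g - a) : ℤ)) ^ 2 ≤
      (Fintype.card G - #C) * E[A, B] := by
  have hcard : (#(g +ᵥ -C)ᶜ : ℤ) = Fintype.card G - #C := by
    rw [card_compl, card_vadd_finset, card_neg, Nat.cast_sub (card_le_univ C)]
  have hmem (x : G) : x ∈ (g +ᵥ -C)ᶜ ↔ g - x ∉ C := by
    rw [mem_compl, ← neg_vadd_mem_iff, mem_neg', vadd_eq_add, neg_add_rev, neg_neg,
      sub_eq_add_neg, add_comm]
  have hpairs : (#{p ∈ A ×ˢ B | p.1 + p.2 ∈ (g +ᵥ -C)ᶜ} : ℤ) =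
      #A * #B - ∑ a ∈ A, (B.addConvolution C (g - a) : ℤ) := by
    have hsplit := card_filter_add_card_filter_not (s := A ×ˢ B) fun p => g - (p.1 + p.2) ∈ C
    rw [card_product, ← sum_addConvolution_sub] at hsplit
    simp only [hmem]
    zify at hsplit
    linarith
  rw [← hpairs, ← hcard]
  exact_mod_cast card_sq_le_card_mul_addEnergy A B (g +ᵥ -C)ᶜ

-- If every difference had multiplicity between `ν` and `#A`, summing `(#A - r) * (r - ν) ≥ 0` over
-- `A - A` would do; `β` absorbs the multiplicities below `ν`.
lemma addEnergy_add_le {R : Type*} [CommRing R] [LinearOrder R] [IsStrictOrderedRing R]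
    (A : Finset G) {K ν : R} {β : G → R} (hK : 0 ≤ K) (hβ : ∀ a ∈ A, 0 ≤ β a)
    (hcard : ∀ d ∈ A - A, (#A : R) ≤ (K + 1) * A.addConvolution (-A) d)
    (hν : ∀ a ∈ A, ∀ b ∈ A, ν ≤ A.addConvolution (-A) (a - b) + β a + β b) :
    (E[A] : R) + ν * #A * #(A - A) ≤
      (ν + #A) * (#A : R) ^ 2 + 2 * K * #A * ∑ a ∈ A, β a := by
  set r : G → R := fun d => A.addConvolution (-A) d with hr
  set δ : G → R := fun d => max 0 (ν - r d)
  have hpoint : ∀ d ∈ A - A, (#A - r d) * (ν - r d) ≤ K * (r d * δ d) := by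
    intro d hd
    have hrA : r d ≤ #A := Nat.cast_le.2 addConvolution_le_card_left
    calc (#A - r d) * (ν - r d) ≤ (#A - r d) * δ d :=
          mul_le_mul_of_nonneg_left (le_max_right _ _) (sub_nonneg.2 hrA)
      _ ≤ (K * r d) * δ d :=
          mul_le_mul_of_nonneg_right (by linarith [hcard d hd]) (le_max_left _ _)
      _ = K * (r d * δ d) := mul_assoc _ _ _
  have hdeficit : ∑ d ∈ A - A, r d * δ d ≤ 2 * #A * ∑ a ∈ A, β a :=
    calc ∑ d ∈ A - A, r d * δ d = ∑ p ∈ A ×ˢ A, δ (p.1 - p.2) := by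
          simp only [sum_product_sub, nsmul_eq_mul, hr]
      _ ≤ ∑ p ∈ A ×ˢ A, (β p.1 + β p.2) := by
          refine sum_le_sum fun p hp => ?_
          obtain ⟨ha, hb⟩ := mem_product.1 hp
          exact max_le (add_nonneg (hβ _ ha) (hβ _ hb)) (by linarith [hν _ ha _ hb])
      _ = 2 * #A * ∑ a ∈ A, β a := by
          simp only [sum_product, sum_add_distrib, sum_const, nsmul_eq_mul, ← mul_sum]
          ring
  have hsum : ∑ d ∈ A - A, r d = (#A : R) ^ 2 := by
    simpa [hr, sq] using (sum_product_sub A A fun _ => (1 : R)).symm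
  have hsq : ∑ d ∈ A - A, r d ^ 2 = (E[A] : R) := by
    simp [addEnergy_eq_sum_sq_addConvolution_neg, hr]
  have hexpand : ∑ d ∈ A - A, (#A - r d) * (ν - r d) =
      #(A - A) * (ν * #A) - (ν + #A) * (#A : R) ^ 2 + E[A] := by
    rw [← hsum, ← hsq, mul_sum, ← nsmul_eq_mul, ← sum_const, ← sum_sub_distrib, ← sum_add_distrib]
    exact sum_congr rfl fun d _ => by ring
  have htotal := sum_le_sum hpoint
  rw [hexpand, ← mul_sum] at htotal
  linarith [mul_le_mul_of_nonneg_left hdeficit hK]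

end Energy

section SmallDoubling

lemma exists_addSubgroup_of_doubling_lt_three_halves {G : Type*} [AddGroup G] [DecidableEq G]
    {A : Finset G} (h : (#(A + A) : ℚ) < 3 / 2 * #A) :
    ∃ H : AddSubgroup G, Finite H ∧ (Nat.card H : ℚ) < 3 / 2 * #A ∧
      ∀ a ∈ A, ∀ b ∈ A, -a + b ∈ H := by
  obtain ⟨H, _, hcard, hcoset⟩ := doubling_lt_three_halves (G := Multiplicative G) (A := A) h
  refine ⟨Subgroup.toAddSubgroup' H, inferInstanceAs (Finite H), ?_, fun a ha b hb => ?_⟩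
  · rwa [← Nat.card_eq_fintype_card] at hcard
  · exact Set.mem_smul_set_iff_inv_smul_mem.1 ((hcoset a ha).1 hb)

lemma exists_index_eq_two_of_card_add_card_le {G : Type*} [AddCommGroup G] [Fintype G]
    [DecidableEq G] {A : Finset G} (hlarge : 2 * Fintype.card G < 5 * #A)
    (hadd : #(A + A) + #A ≤ Fintype.card G) :
    ∃ H : AddSubgroup G, H.index = 2 ∧ ∃ c : G, ∀ a ∈ A, a - c ∈ H := by
  obtain ⟨c, hc⟩ : A.Nonempty := card_pos.1 (by omega)
  have hdouble : (#(A + A) : ℚ) < 3 / 2 * #A := by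
    have : (2 * #(A + A) : ℚ) < 3 * #A := by norm_cast; omega
    linarith
  obtain ⟨H, _, hlt, hdiff⟩ := exists_addSubgroup_of_doubling_lt_three_halves hdouble
  have hmem : ∀ a ∈ A, a - c ∈ H := fun a ha => neg_add_eq_sub c a ▸ hdiff c hc a ha
  refine ⟨H, ?_, c, hmem⟩
  have hlower : #A ≤ Nat.card H := by
    rw [← Nat.card_eq_finsetCard]
    exact Nat.card_le_card_of_injective (fun a => ⟨a.1 - c, hmem a a.2⟩)
      fun a b hab => Subtype.ext (sub_left_injective (Subtype.ext_iff.1 hab))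
  have hupper : 2 * Nat.card H < 3 * #A := by
    have : (2 * Nat.card H : ℚ) < 3 * #A := by linarith
    exact_mod_cast this
  have hAA : #A ≤ #(A + A) := card_le_card_add_right ⟨c, hc⟩
  have hindex : Nat.card H * H.index = Fintype.card G := by
    rw [H.card_mul_index, Nat.card_eq_fintype_card]
  have hone : 1 < H.index := by by_contra!; nlinarith
  have hthree : H.index < 3 := by by_contra!; nlinarith
  omega

end SmallDoubling

/-- `g` is not the sum of three pairwise distinct elements of `A`, i.e. `g ∉ Σ₃(A)`. It is phrased
with ordered triples instead of three-element subsets so that solutions of `a + b + c = g` in `A`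
can be counted. -/
def OnlyDegenerateTriples {G : Type*} [Add G] (A : Finset G) (g : G) : Prop :=
  ∀ a ∈ A, ∀ b ∈ A, ∀ c ∈ A, a + b + c = g → a = b ∨ a = c ∨ b = c

lemma onlyDegenerateTriples_of_not_exists {G : Type*} [AddCommMonoid G] {A : Finset G} {g : G}
    (h : ¬ ∃ B ⊆ A, #B = 3 ∧ ∑ b ∈ B, b = g) : OnlyDegenerateTriples A g := by
  classical
  intro a ha b hb c hc hsum
  by_contra! ⟨hab, hac, hbc⟩
  refine h ⟨{a, b, c}, by simp [insert_subset_iff, *],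
    card_eq_three.2 ⟨a, b, c, hab, hac, hbc, rfl⟩, ?_⟩
  rw [sum_insert (by simp [hab, hac]), sum_pair hbc, ← add_assoc, hsum]

-- Since `2 * E` is at most `n³` up to an error of order `t * n²`, the left side is at most about
-- `3n⁴/2`, against `2n⁴` on the right.
lemma mul_lt_two_mul_sq_of_two_mul_le {n t E B : ℤ} (ht : 1 ≤ t) (hn : 12 * t + 55 ≤ n)
    (hB : t * B ≤ (t - 1) * n)
    (hE : 2 * E ≤ n * (n ^ 2 + (t + 13) * n - 11 * (t + 2) + 8 * B)) :
    (3 * n - 1) * E < 2 * (n ^ 2 - 3 * n) ^ 2 := by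
  set P := n ^ 2 + (t + 13) * n - 11 * (t + 2) with hP
  have hEt : t * (2 * E) ≤ n * (t * P + 8 * ((t - 1) * n)) := by
    nlinarith
  have hgap : t * (t + 2) ≤ n * (t * n - 3 * t ^ 2 - 86 * t + 24) + 34 * t ^ 2 + 123 * t - 8 := by
    obtain ⟨k, hk, rfl⟩ : ∃ k, 0 ≤ k ∧ n = 12 * t + 55 + k :=
      ⟨n - (12 * t + 55), by linarith, by ring⟩
    have hcubic : t * (t + 2) ≤ 108 * t ^ 3 + 157 * t ^ 2 - 1294 * t + 1312 := by
      nlinarith [mul_nonneg (sub_nonneg.2 ht) (sq_nonneg (t - 2))]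
    have hlinear : 0 ≤ k * (21 * t ^ 2 + 24 * t + 24 + t * k) := by positivity
    linarith
  have hmain : (3 * n - 1) * (t * P + 8 * ((t - 1) * n)) < 4 * t * n * (n - 3) ^ 2 := by
    nlinarith
  have hfinal : (2 * t) * ((3 * n - 1) * E) < (2 * t) * (2 * (n ^ 2 - 3 * n) ^ 2) :=
    calc (2 * t) * ((3 * n - 1) * E) = (3 * n - 1) * (t * (2 * E)) := by ring
      _ ≤ (3 * n - 1) * (n * (t * P + 8 * ((t - 1) * n))) := by gcongr; linarith
      _ = n * ((3 * n - 1) * (t * P + 8 * ((t - 1) * n))) := by ring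
      _ < n * (4 * t * n * (n - 3) ^ 2) := by gcongr; linarith
      _ = (2 * t) * (2 * (n ^ 2 - 3 * n) ^ 2) := by ring
  exact lt_of_mul_lt_mul_left hfinal (by linarith)

namespace OnlyDegenerateTriples

variable {G : Type*} [AddCommGroup G] [DecidableEq G] {A : Finset G} {g : G} {t : ℕ}

lemma addConvolution_le (h : OnlyDegenerateTriples A g) {a : G} (ha : a ∈ A) :
    A.addConvolution A (g - a) ≤ 2 + #{b ∈ A | 2 • b = g - a} := by
  have hsub : {b ∈ A | g - a - b ∈ A} ⊆ {a, g - a - a} ∪ {b ∈ A | 2 • b = g - a} := by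
    intro b hb
    obtain ⟨hb, hc⟩ := mem_filter.1 hb
    simp only [mem_union, mem_insert, mem_singleton, mem_filter]
    obtain hab | hac | hbc := h a ha b hb _ hc (by abel)
    · exact .inl (.inl hab.symm)
    · exact .inl (.inr (eq_sub_iff_add_eq'.2 (eq_sub_iff_add_eq.1 hac)))
    · exact .inr ⟨hb, two_nsmul b ▸ eq_sub_iff_add_eq.1 hbc⟩
  rw [addConvolution_eq_card_filter_sub_mem]
  grw [card_le_card hsub, card_union_le, card_le_two]

lemma sum_addConvolution_le (h : OnlyDegenerateTriples A g) :
    ∑ a ∈ A, A.addConvolution A (g - a) ≤ 3 * #A :=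
  calc ∑ a ∈ A, A.addConvolution A (g - a)
      ≤ ∑ a ∈ A, (2 + #{b ∈ A | 2 • b = g - a}) := sum_le_sum fun _ ha => h.addConvolution_le ha
    _ = 2 * #A + ∑ a ∈ A, #{b ∈ A | 2 • b = g - a} := by
      rw [sum_add_distrib, sum_const, smul_eq_mul, mul_comm]
    _ ≤ 3 * #A := by
      grw [sum_card_filter_map_eq_sub_le]
      omega

-- The average of `A.addConvolution A (g - a)` over `a ∈ A` is at most `3`, so only its excess
-- over `3` needs to be controlled.
lemma mul_sum_addConvolution_sub_three_le (h : OnlyDegenerateTriples A g)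
    (ht : ∀ x, #{b ∈ A | 2 • b = x} ≤ t) :
    t * ∑ a ∈ A, (A.addConvolution A (g - a) - 3) ≤ (t - 1) * #A := by
  have hterm : ∀ a ∈ A, t * (A.addConvolution A (g - a) - 3) ≤
      (t - 1) * #{b ∈ A | 2 • b = g - a} := by
    intro a ha
    have hle := h.addConvolution_le ha
    set f := #{b ∈ A | 2 • b = g - a}
    calc t * (A.addConvolution A (g - a) - 3) ≤ t * (f - 1) :=
          Nat.mul_le_mul_left t (by omega)
      _ = t * f - t := by rw [Nat.mul_sub, mul_one]
      _ ≤ t * f - f := Nat.sub_le_sub_left (ht _) _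
      _ = (t - 1) * f := by rw [Nat.sub_mul, one_mul]
  rw [mul_sum]
  grw [sum_le_sum hterm, ← mul_sum, sum_card_filter_map_eq_sub_le]

variable [Fintype G]

lemma two_mul_sq_le_mul_addEnergy (h : OnlyDegenerateTriples A g)
    (hlarge : 2 * Fintype.card G < 5 * #A) (hA : 3 ≤ #A) :
    2 * ((#A : ℤ) ^ 2 - 3 * #A) ^ 2 ≤ (3 * #A - 1) * E[A] := by
  have hsum : ∑ a ∈ A, (A.addConvolution A (g - a) : ℤ) ≤ 3 * #A := by
    exact_mod_cast h.sum_addConvolution_le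
  have hnonneg : 0 ≤ (#A : ℤ) ^ 2 - 3 * #A := by
    zify at hA
    nlinarith
  calc (2 : ℤ) * ((#A : ℤ) ^ 2 - 3 * #A) ^ 2
      ≤ 2 * ((#A : ℤ) ^ 2 - ∑ a ∈ A, (A.addConvolution A (g - a) : ℤ)) ^ 2 := by gcongr
    _ ≤ 2 * (((Fintype.card G : ℤ) - #A) * E[A]) := by
      grw [sq (#A : ℤ), sq_card_mul_card_sub_le_mul_addEnergy]
    _ = (2 * (Fintype.card G : ℤ) - 2 * #A) * E[A] := by ring
    _ ≤ (3 * (#A : ℤ) - 1) * E[A] := by gcongr ?_ * _; omega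

lemma two_mul_addEnergy_le (h : OnlyDegenerateTriples A g)
    (ht : ∀ x, #{b ∈ A | 2 • b = x} ≤ t) (hlarge : 2 * Fintype.card G < 5 * #A)
    (hA : 12 * t + 21 ≤ #A) (hg : g ∈ A + A + A) :
    2 * (E[A] : ℤ) ≤ #A * ((#A : ℤ) ^ 2 + (t + 13) * #A - 11 * (t + 2) +
      8 * (∑ a ∈ A, (A.addConvolution A (g - a) - 3) : ℕ)) := by
  have hconv : ∀ a ∈ A, A.addConvolution A (g - a) ≤ t + 2 := fun a ha => by
    grw [h.addConvolution_le ha, ht, add_comm]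
  have hmult (a b : G) : 3 * #A ≤ Fintype.card G + A.addConvolution (-A) (a - b) +
      A.addConvolution A (g - b) + A.addConvolution A (g - a) := by
    linarith [card_add_card_add_card_le_addConvolution A A A b a g]
  have hsub : 2 * #A ≤ #(A - A) + (t + 2) := by
    obtain ⟨_, hxy, z, hz, rfl⟩ := mem_add.1 hg
    obtain ⟨x, hx, y, hy, rfl⟩ := mem_add.1 hxy
    have hcard := card_add_card_le_card_sub_add_addConvolution A A hx hy
    have hz := hconv z hz
    rw [add_sub_cancel_right] at hz
    omega
  have henergy := addEnergy_add_le A (K := (2 : ℤ)) (ν := 3 * #A - Fintype.card G - 6)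
    (β := fun a => (A.addConvolution A (g - a) - 3 : ℕ)) (by norm_num)
    (fun _ _ => Int.natCast_nonneg _)
    (fun d hd => by
      obtain ⟨a, ha, b, hb, rfl⟩ := mem_sub.1 hd
      have := hmult a b
      have := hconv a ha
      have := hconv b hb
      omega)
    (fun a _ b _ => by
      have := hmult a b
      omega)
  have hmain : ((#A : ℤ) - 11) * (#A - (t + 2)) ≤
      2 * (3 * #A - Fintype.card G - 6) * (#(A - A) - #A) :=
    mul_le_mul (by omega) (by omega) (by omega) (by omega)
  rw [← Nat.cast_sum] at henergy
  nlinarith [mul_le_mul_of_nonneg_left hmain (Int.natCast_nonneg #A)]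

theorem notMem_add_add (h : OnlyDegenerateTriples A g)
    (ht : ∀ x, #{b ∈ A | 2 • b = x} ≤ t) (hlarge : 2 * Fintype.card G < 5 * #A)
    (hA : 12 * t + 54 < #A) : g ∉ A + A + A := by
  intro hg
  have htpos : 1 ≤ t := by
    obtain ⟨a, ha⟩ : A.Nonempty := card_pos.1 (by omega)
    have hfiber : 0 < #{b ∈ A | 2 • b = 2 • a} := card_pos.2 ⟨a, mem_filter.2 ⟨ha, rfl⟩⟩
    exact hfiber.trans_le (ht _)
  have hexcess := h.mul_sum_addConvolution_sub_three_le ht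
  zify [htpos] at hexcess
  have hlower := h.two_mul_sq_le_mul_addEnergy hlarge (by omega)
  have hupper := h.two_mul_addEnergy_le ht hlarge (by omega) hg
  have hgap := mul_lt_two_mul_sq_of_two_mul_le (mod_cast htpos) (by omega) (mod_cast hexcess) hupper
  exact hgap.not_ge hlower

end OnlyDegenerateTriples

end ThreefoldSum

open ThreefoldSum in
open scoped Pointwise in
/-- Lemma 2.8 (from Han–Ren): if `A` is a subset of a finite abelian group `G` with
`|A| > max{(2/5)|G|, 12|G[2]| + 54}`, where `G[2]` is the 2-torsion subgroup of `G`,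
then either every element of `G` is a sum of 3 pairwise distinct elements of `A`
(`Σ₃(A) = G`), or `A` is contained in a coset of an index-two subgroup of `G`. -/
theorem sigma3_or_coset {G : Type*} [AddCommGroup G] [Fintype G]
    (A : Finset G)
    (hA : (A.card : ℚ) >
      max ((2 / 5 : ℚ) * Fintype.card G)
        (12 * (Nat.card {x : G | 2 • x = 0}) + 54)) :
    (∀ g : G, ∃ B ⊆ A, B.card = 3 ∧ ∑ b ∈ B, b = g) ∨
      (∃ H : AddSubgroup G, H.index = 2 ∧ ∃ c : G, ∀ a ∈ A, a - c ∈ H) := by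
  classical
  rw [or_iff_not_imp_left, not_forall]
  rintro ⟨g, hg⟩
  obtain ⟨hlarge, htorsion⟩ := max_lt_iff.1 hA
  have hlarge : 2 * Fintype.card G < 5 * A.card := by
    have : 2 * (Fintype.card G : ℚ) < 5 * A.card := by linarith
    exact_mod_cast this
  have hdegenerate : OnlyDegenerateTriples A g := onlyDegenerateTriples_of_not_exists hg
  have hmiss : g ∉ A + A + A :=
    hdegenerate.notMem_add_add (card_filter_map_eq_le_card_ker (nsmulAddMonoidHom 2) A) hlarge
      (mod_cast htorsion)
  exact exists_index_eq_two_of_card_add_card_le hlarge (card_add_card_le_of_notMem_add hmiss)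
end

section
/- Let G be an additive abelian group, let Q_1, ..., Q_s and P_1, ..., P_n be elements of G of finite order such that the order of Q_j is coprime to the order of P_i for all 1 ≤ i ≤ n and 1 ≤ j ≤ s, and let k be a positive integer. Suppose that for all nonnegative integers k_1, ..., k_s with k_1 + ... + k_s = k one has [k_1]Q_1 + ... + [k_s]Q_s ≠ 0. Then for every choice of indices j_1, ..., j_k ∈ {1, ..., s} and i_1, ..., i_k ∈ {1, ..., n}, the sum (Q_{j_1} + P_{i_1}) + ... + (Q_{j_k} + P_{i_k}) is nonzero. -/
/-! The order of a sum divides the product of the orders, so `∑ Q_{j_m}` and `∑ P_{i_m}` have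
coprime orders. For two such elements the order of the sum is the product of the orders; if the sum
is zero then both are zero. But `∑ Q_{j_m} = ∑ j, [k_j] Q_j`, where `k_j` counts the occurrences of
`j`. -/

theorem eq_zero_of_add_eq_zero_of_coprime_addOrderOf {G : Type*} [AddMonoid G] {x y : G}
    (hxy : AddCommute x y) (hcop : (addOrderOf x).Coprime (addOrderOf y))
    (h : x + y = 0) : x = 0 := by
  have hmul : addOrderOf x * addOrderOf y = 1 := by
    rw [← hxy.addOrderOf_add_eq_mul_addOrderOf_of_coprime hcop, h, addOrderOf_zero]
  exact AddMonoid.addOrderOf_eq_one_iff.mp (Nat.eq_one_of_mul_eq_one_right hmul)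

section AddCommMonoid

variable {G ι : Type*} [AddCommMonoid G]

theorem coprime_addOrderOf_sum_left {t : Finset ι} {x : ι → G} {d : ℕ}
    (h : ∀ m ∈ t, (addOrderOf (x m)).Coprime d) : (addOrderOf (∑ m ∈ t, x m)).Coprime d := by
  refine Finset.sum_induction x (fun g ↦ (addOrderOf g).Coprime d) (fun a b ha hb ↦ ?_) ?_ h
  · exact (ha.mul_left hb).of_dvd_left (AddCommute.all a b).addOrderOf_add_dvd_mul_addOrderOf
  · rw [addOrderOf_zero]
    exact Nat.coprime_one_left d

theorem coprime_addOrderOf_sum_sum {κ : Type*} {t : Finset ι} {u : Finset κ} {x : ι → G}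
    {y : κ → G} (h : ∀ i ∈ t, ∀ j ∈ u, (addOrderOf (x i)).Coprime (addOrderOf (y j))) :
    (addOrderOf (∑ i ∈ t, x i)).Coprime (addOrderOf (∑ j ∈ u, y j)) :=
  coprime_addOrderOf_sum_left fun i hi ↦
    (coprime_addOrderOf_sum_left fun j hj ↦ (h i hi j hj).symm).symm

theorem sum_comp_eq_sum_card_fiber_nsmul {J : Type*} [Fintype J] [DecidableEq J]
    (t : Finset ι) (f : ι → J) (x : J → G) :
    ∑ m ∈ t, x (f m) = ∑ j, Finset.card {m ∈ t | f m = j} • x j := by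
  simp only [← Finset.sum_const, Finset.sum_fiberwise']

-- `addOrderOf` is `0` at an element of infinite order, and `0` is coprime only to `1`, so such an
-- element in one family forces the other family to vanish.
theorem mds_elliptic_construction_general_s5 {I J : Type*} [Fintype ι] [Fintype J]
    (Q : J → G) (P : I → G) (hcop : ∀ i j, (addOrderOf (Q j)).Coprime (addOrderOf (P i)))
    (hne : ∀ κ : J → ℕ, ∑ j, κ j = Fintype.card ι → ∑ j, κ j • Q j ≠ 0)
    (jdx : ι → J) (idx : ι → I) : ∑ m, (Q (jdx m) + P (idx m)) ≠ 0 := by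
  classical
  intro hsum
  rw [Finset.sum_add_distrib] at hsum
  have hcop_sums : (addOrderOf (∑ m, Q (jdx m))).Coprime (addOrderOf (∑ m, P (idx m))) :=
    coprime_addOrderOf_sum_sum fun m _ l _ ↦ hcop (idx l) (jdx m)
  have hQ_sum : ∑ m, Q (jdx m) = 0 :=
    eq_zero_of_add_eq_zero_of_coprime_addOrderOf (AddCommute.all _ _) hcop_sums hsum
  have hcard : ∑ j, Finset.card {m | jdx m = j} = Fintype.card ι :=
    (Finset.card_eq_sum_card_fiberwise fun m _ ↦ Finset.mem_coe.mpr (Finset.mem_univ _)).symm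
  exact hne _ hcard ((sum_comp_eq_sum_card_fiber_nsmul _ jdx Q).symm.trans hQ_sum)

end AddCommMonoid

/-- Lemma 2.5 (group-theoretic content): let `G` be an additive abelian group and
`Q₁, …, Q_s`, `P₁, …, P_n` elements of finite order such that the order of each `Q j` is
coprime to the order of each `P i`. If `[k₁]Q₁ + ⋯ + [k_s]Q_s ≠ 0` for all nonnegative
`k₁ + ⋯ + k_s = k`, then any sum of `k` terms of the form `Q j + P i` is nonzero. -/
theorem mds_elliptic_construction {G : Type*} [AddCommGroup G] (s n k : ℕ) (hk : 0 < k)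
    (Q : Fin s → G) (P : Fin n → G)
    (hQ : ∀ j, IsOfFinAddOrder (Q j)) (hP : ∀ i, IsOfFinAddOrder (P i))
    (hcop : ∀ (i : Fin n) (j : Fin s), Nat.Coprime (addOrderOf (Q j)) (addOrderOf (P i)))
    (hne : ∀ κ : Fin s → ℕ, (∑ j, κ j) = k → ∑ j, κ j • Q j ≠ 0) :
    ∀ (jdx : Fin k → Fin s) (idx : Fin k → Fin n),
      ∑ m, (Q (jdx m) + P (idx m)) ≠ 0 :=
  mds_elliptic_construction_general_s5 Q P hcop (by simpa only [Fintype.card_fin] using hne)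
end

section
/- Let G be an additive abelian group, let Q_1, ..., Q_s, P_1, ..., P_n and Q'_1, ..., Q'_t be elements of G of finite order such that the order of each Q_j and the order q_u of each Q'_u is coprime to the order of P_i for all i, j, u. Let k be a positive integer and let m_1, ..., m_t be nonnegative integers. Suppose that for all nonnegative integers k_1, ..., k_s with k_1 + ... + k_s = k one has [k_1]Q_1 + ... + [k_s]Q_s + [q_1 − m_1]Q'_1 + ... + [q_t − m_t]Q'_t ≠ 0. Then for every choice of indices j_1, ..., j_k ∈ {1, ..., s} and i_1, ..., i_k ∈ {1, ..., n}, the sum (Q_{j_1} + P_{i_1}) + ... + (Q_{j_k} + P_{i_k}) is different from [m_1]Q'_1 + ... + [m_t]Q'_t. -/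
/-!
An element of a subgroup generated by elements whose orders are coprime to `d` again has order
coprime to `d`. Applied on both sides, this shows that the subgroup generated by the `Q j` and
`Q' u` meets the one generated by the `P i` only in `0`. If a sum of terms `Q j + P i` equals
`∑ u, m u • Q' u`, its `P`-part therefore vanishes; collecting equal terms in the `Q`-part and
using `q u • Q' u = 0` turns the remaining equation into one excluded by hypothesis.
-/

theorem eq_of_add_eq_of_disjoint {G : Type*} [AddGroup G] {H K : AddSubgroup G}
    (hHK : Disjoint H K) {x y z : G} (hx : x ∈ H) (hy : y ∈ K) (hz : z ∈ H) (h : x + y = z) :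
    x = z := by
  have hyH : y ∈ H := (H.add_mem_cancel_left hx).1 (h ▸ hz)
  rwa [AddSubgroup.disjoint_def.1 hHK hyH hy, add_zero] at h

section CoprimeOrders

variable {G : Type*} [AddCommGroup G] {S T : Set G}

theorem coprime_addOrderOf_of_mem_closure {x : G} {d : ℕ}
    (hS : ∀ s ∈ S, (addOrderOf s).Coprime d) (hx : x ∈ AddSubgroup.closure S) :
    (addOrderOf x).Coprime d := by
  induction hx using AddSubgroup.closure_induction with
  | mem s hs => exact hS s hs
  | zero => rw [addOrderOf_zero]; exact Nat.coprime_one_left d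
  | add a b _ _ ha hb =>
    have hdvd : addOrderOf (a + b) ∣ addOrderOf a * addOrderOf b :=
      (AddCommute.all a b).addOrderOf_add_dvd_mul_addOrderOf
    exact (ha.mul_left hb).coprime_dvd_left hdvd
  | neg a _ ha => rwa [addOrderOf_neg]

theorem disjoint_closure_of_coprime_addOrderOf
    (h : ∀ s ∈ S, ∀ t ∈ T, (addOrderOf s).Coprime (addOrderOf t)) :
    Disjoint (AddSubgroup.closure S) (AddSubgroup.closure T) := by
  rw [AddSubgroup.disjoint_def]
  intro x hxS hxT
  have hTx : ∀ t ∈ T, (addOrderOf t).Coprime (addOrderOf x) := fun t ht =>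
    (coprime_addOrderOf_of_mem_closure (fun s hs => h s hs t ht) hxS).symm
  have hxx : (addOrderOf x).Coprime (addOrderOf x) := coprime_addOrderOf_of_mem_closure hTx hxT
  exact AddMonoid.addOrderOf_eq_one_iff.1 ((Nat.coprime_self _).1 hxx)

end CoprimeOrders

section TranslatedSums

open Finset

theorem sum_card_fiber_nsmul {α ι M : Type*} [Fintype α] [Fintype ι] [DecidableEq ι]
    [AddCommMonoid M] (g : α → ι) (f : ι → M) : ∑ j, #{a | g a = j} • f j = ∑ a, f (g a) := by
  simp only [← sum_const, sum_fiberwise']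

theorem mds_elliptic_construction_general_general {G α β ι τ : Type*} [AddCommGroup G]
    [Fintype α] [Fintype ι] [Fintype τ] {Q : ι → G} {P : β → G} {Q' : τ → G}
    (hdisj : Disjoint (AddSubgroup.closure (Set.range Q ∪ Set.range Q'))
      (AddSubgroup.closure (Set.range P)))
    {q m : τ → ℕ} (hq : ∀ u, q u • Q' u = 0) (hm : ∀ u, m u ≤ q u)
    (hne : ∀ κ : ι → ℕ, ∑ j, κ j = Fintype.card α →
      ∑ j, κ j • Q j + ∑ u, (q u - m u) • Q' u ≠ 0)
    (jdx : α → ι) (idx : α → β) :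
    ∑ a, (Q (jdx a) + P (idx a)) ≠ ∑ u, m u • Q' u := by
  classical
  intro heq
  have hQ_mem : ∑ a, Q (jdx a) ∈ AddSubgroup.closure (Set.range Q ∪ Set.range Q') :=
    sum_mem fun a _ => AddSubgroup.subset_closure (.inl ⟨jdx a, rfl⟩)
  have hP_mem : ∑ a, P (idx a) ∈ AddSubgroup.closure (Set.range P) :=
    sum_mem fun a _ => AddSubgroup.subset_closure ⟨idx a, rfl⟩
  have hQ'_mem : ∑ u, m u • Q' u ∈ AddSubgroup.closure (Set.range Q ∪ Set.range Q') :=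
    sum_mem fun u _ => nsmul_mem (AddSubgroup.subset_closure (.inr ⟨u, rfl⟩)) (m u)
  have hQ_eq : ∑ a, Q (jdx a) = ∑ u, m u • Q' u :=
    eq_of_add_eq_of_disjoint hdisj hQ_mem hP_mem hQ'_mem (sum_add_distrib.symm.trans heq)
  have hcompl : ∑ u, (q u - m u) • Q' u = -∑ u, m u • Q' u := by
    simp only [sub_nsmul _ (hm _), hq, zero_add, sum_neg_distrib]
  refine hne (fun j => #{a | jdx a = j}) ?_ ?_
  · simpa using sum_card_fiber_nsmul jdx fun _ => (1 : ℕ)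
  · rw [sum_card_fiber_nsmul jdx Q, hQ_eq, hcompl, add_neg_cancel]

end TranslatedSums

/-- Corollary 2.6 (group-theoretic content): let `G` be an additive abelian group and
`Q₁, …, Q_s`, `P₁, …, P_n`, `Q'₁, …, Q'_t` elements of finite order such that the orders of
the `Q j` and the orders `q u` of the `Q' u` are coprime to the orders of the `P i`. Let
`k > 0` and `m₁, …, m_t` be nonnegative integers with `m u ≤ q u`. If
`[k₁]Q₁ + ⋯ + [k_s]Q_s + [q₁ - m₁]Q'₁ + ⋯ + [q_t - m_t]Q'_t ≠ 0` for all nonnegative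
`k₁ + ⋯ + k_s = k`, then any sum of `k` terms of the form `Q j + P i` is different from
`[m₁]Q'₁ + ⋯ + [m_t]Q'_t`. -/
theorem mds_elliptic_construction_general {G : Type*} [AddCommGroup G]
    (s n t k : ℕ) (hk : 0 < k)
    (Q : Fin s → G) (P : Fin n → G) (Q' : Fin t → G)
    (hQ : ∀ j, IsOfFinAddOrder (Q j)) (hP : ∀ i, IsOfFinAddOrder (P i))
    (hQ' : ∀ u, IsOfFinAddOrder (Q' u))
    (hcopQ : ∀ (i : Fin n) (j : Fin s), Nat.Coprime (addOrderOf (Q j)) (addOrderOf (P i)))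
    (hcopQ' : ∀ (i : Fin n) (u : Fin t), Nat.Coprime (addOrderOf (Q' u)) (addOrderOf (P i)))
    (m : Fin t → ℕ) (hm : ∀ u, m u ≤ addOrderOf (Q' u))
    (hne : ∀ κ : Fin s → ℕ, (∑ j, κ j) = k →
      ∑ j, κ j • Q j + ∑ u, (addOrderOf (Q' u) - m u) • Q' u ≠ 0) :
    ∀ (jdx : Fin k → Fin s) (idx : Fin k → Fin n),
      ∑ i, (Q (jdx i) + P (idx i)) ≠ ∑ u, m u • Q' u := by
  refine mds_elliptic_construction_general_general (disjoint_closure_of_coprime_addOrderOf ?_)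
    (fun u => addOrderOf_nsmul_eq_zero (Q' u)) hm fun κ hκ => hne κ (hκ.trans (Fintype.card_fin k))
  rintro _ (⟨j, rfl⟩ | ⟨u, rfl⟩) _ ⟨i, rfl⟩
  exacts [hcopQ i j, hcopQ' i u]
end
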